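/- Let N, D ∈ ℕ with D ≥ 1 and let α > 0. Let w₁,…,w_D be independent random vectors in ℝ^N, each with independent components distributed according to the centered Cauchy distribution with scale α⁻¹, and let α₁,…,α_D be real random variables (phases), independent of everything else, each uniformly distributed on [0, 2π]. For x ∈ ℝ^N define the random feature vector φ(x) ∈ ℝ^{2D} with entries φ(x)_{2j−1} = (1/√D)·cos(⟨w_j, x⟩ + α_j) and φ(x)_{2j} = (1/√D)·sin(⟨w_j, x⟩ + α_j) for j = 1,…,D. Then for all x, y ∈ ℝ^N, the expected Euclidean inner product satisfies E[⟨φ(x), φ(y)⟩] = exp(−‖x−y‖₁/α), i.e. the quantum feature map built from these random Fourier features is an unbiased estimator of the Laplacian kernel K_L(x,y) = exp(−‖x−y‖₁/α). -/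

import Mathlib

open MeasureTheory

/-- The centered Cauchy distribution with scale parameter `γ`: the measure on `ℝ`
with density `s ↦ γ/(π(s² + γ²))` with respect to Lebesgue measure. -/
noncomputable def cauchyMeasure (γ : ℝ) : Measure ℝ :=
  volume.withDensity fun s => ENNReal.ofReal (γ / (Real.pi * (s ^ 2 + γ ^ 2)))

/-- The uniform distribution on `[0, 2π]`: Lebesgue measure restricted to `[0, 2π]`,
normalized to total mass `1`. -/
noncomputable def uniformPhase : Measure ℝ :=
  (ENNReal.ofReal (2 * Real.pi))⁻¹ • volume.restrict (Set.Icc 0 (2 * Real.pi))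

/-- The phase-shifted random Fourier feature vector `φ(x) ∈ ℝ^{2D}` built from
frequencies `w = (w₁,…,w_D)` and phases `b = (b₁,…,b_D)`: indexing the `2D`
coordinates by pairs `(j, 0)` and `(j, 1)`, the entries are
`(1/√D)·cos(⟨w_j, x⟩ + b_j)` and `(1/√D)·sin(⟨w_j, x⟩ + b_j)`. -/
noncomputable def lapFeature (N D : ℕ) (w : Fin D → Fin N → ℝ) (b : Fin D → ℝ)
    (x : Fin N → ℝ) : Fin D × Fin 2 → ℝ := fun p =>
  if p.2 = 0 then (1 / Real.sqrt D) * Real.cos ((∑ k, w p.1 k * x k) + b p.1)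
  else (1 / Real.sqrt D) * Real.sin ((∑ k, w p.1 k * x k) + b p.1)

/-!
By `cos² + sin² = 1` in the form `cos a cos b + sin a sin b = cos (a - b)`, the phases cancel in
`⟨φ(x), φ(y)⟩`, which becomes the average over `j` of `cos ⟨w_j, x - y⟩`. Its expectation is the
real part of the characteristic function of `w_j` at `x - y`, a product of one-dimensional Cauchy
characteristic functions. These come from Fourier inversion: the Cauchy density is the Fourier
transform of a modulated two-sided exponential.
-/

open scoped FourierTransform InnerProductSpace NNReal
open Complex (I)
open ProbabilityTheory (HasLaw cauchyPDFReal cauchyPDFReal_def integrable_cauchyPDFReal)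

section TwoSidedExponential

variable {a c : ℂ}

lemma eqOn_exp_mul_sub_mul_abs_Iic (a c : ℂ) :
    Set.EqOn (fun v : ℝ ↦ Complex.exp (c * v - a * |v|)) (fun v ↦ Complex.exp ((c + a) * v))
      (Set.Iic 0) := by
  intro v hv
  simp only [abs_of_nonpos (Set.mem_Iic.mp hv), Complex.ofReal_neg]
  ring_nf

lemma eqOn_exp_mul_sub_mul_abs_Ioi (a c : ℂ) :
    Set.EqOn (fun v : ℝ ↦ Complex.exp (c * v - a * |v|)) (fun v ↦ Complex.exp ((c - a) * v))
      (Set.Ioi 0) := by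
  intro v hv
  simp only [abs_of_pos (Set.mem_Ioi.mp hv)]
  ring_nf

lemma integrableOn_exp_mul_sub_mul_abs_Iic (h : 0 < (c + a).re) :
    IntegrableOn (fun v : ℝ ↦ Complex.exp (c * v - a * |v|)) (Set.Iic 0) :=
  (integrableOn_congr_fun (eqOn_exp_mul_sub_mul_abs_Iic a c) measurableSet_Iic).mpr
    (integrableOn_exp_mul_complex_Iic h 0)

lemma integrableOn_exp_mul_sub_mul_abs_Ioi (h : (c - a).re < 0) :
    IntegrableOn (fun v : ℝ ↦ Complex.exp (c * v - a * |v|)) (Set.Ioi 0) :=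
  (integrableOn_congr_fun (eqOn_exp_mul_sub_mul_abs_Ioi a c) measurableSet_Ioi).mpr
    (integrableOn_exp_mul_complex_Ioi h 0)

lemma re_add_pos_and_re_sub_neg (h : |c.re| < a.re) : 0 < (c + a).re ∧ (c - a).re < 0 := by
  rw [Complex.add_re, Complex.sub_re]
  constructor <;> linarith [(abs_lt.mp h).1, (abs_lt.mp h).2]

lemma integrable_exp_mul_sub_mul_abs (h : |c.re| < a.re) :
    Integrable fun v : ℝ ↦ Complex.exp (c * v - a * |v|) := by
  obtain ⟨hadd, hsub⟩ := re_add_pos_and_re_sub_neg h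
  rw [← integrableOn_univ, ← Set.Iic_union_Ioi (a := (0 : ℝ))]
  exact (integrableOn_exp_mul_sub_mul_abs_Iic hadd).union
    (integrableOn_exp_mul_sub_mul_abs_Ioi hsub)

lemma integral_exp_mul_sub_mul_abs (h : |c.re| < a.re) :
    ∫ v : ℝ, Complex.exp (c * v - a * |v|) = 2 * a / (a ^ 2 - c ^ 2) := by
  obtain ⟨hadd, hsub⟩ := re_add_pos_and_re_sub_neg h
  have hadd_ne : c + a ≠ 0 := fun h0 ↦ by simp [h0] at hadd
  have hsub_ne : c - a ≠ 0 := fun h0 ↦ by simp [h0] at hsub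
  have hfactor : a ^ 2 - c ^ 2 = -((c + a) * (c - a)) := by ring
  rw [← intervalIntegral.integral_Iic_add_Ioi (integrableOn_exp_mul_sub_mul_abs_Iic hadd)
      (integrableOn_exp_mul_sub_mul_abs_Ioi hsub),
    setIntegral_congr_fun measurableSet_Iic (eqOn_exp_mul_sub_mul_abs_Iic a c),
    setIntegral_congr_fun measurableSet_Ioi (eqOn_exp_mul_sub_mul_abs_Ioi a c),
    integral_exp_mul_complex_Iic hadd, integral_exp_mul_complex_Ioi hsub, hfactor]
  simp only [Complex.ofReal_zero, mul_zero, Complex.exp_zero]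
  field_simp
  ring

end TwoSidedExponential

section CharFun

variable {E : Type*} [NormedAddCommGroup E] [InnerProductSpace ℝ E] [MeasurableSpace E]
  [BorelSpace E]

lemma charFun_withDensity_ofReal [FiniteDimensional ℝ E] {f : E → ℝ} (hf : AEMeasurable f)
    (hf_nonneg : 0 ≤ᵐ[volume] f) (t : E) :
    charFun (volume.withDensity fun v ↦ ENNReal.ofReal (f v)) t =
      𝓕⁻ (fun v ↦ (f v : ℂ)) ((2 * Real.pi)⁻¹ • t) := by
  rw [charFun_apply, integral_withDensity_eq_integral_toReal_smul₀ hf.ennreal_ofReal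
    (ae_of_all _ fun _ ↦ ENNReal.ofReal_lt_top), Real.fourierInv_eq']
  refine integral_congr_ae ?_
  filter_upwards [hf_nonneg] with v hv
  rw [ENNReal.toReal_ofReal hv, inner_smul_right,
    mul_inv_cancel_left₀ Real.two_pi_pos.ne', Complex.real_smul, smul_eq_mul, mul_comm]

lemma integral_cos_inner [SecondCountableTopology E] (μ : Measure E) [IsFiniteMeasure μ] (t : E) :
    ∫ x, Real.cos ⟪x, t⟫_ℝ ∂μ = (charFun μ t).re := by
  have hint : Integrable (fun x ↦ Complex.exp (⟪x, t⟫_ℝ * I)) μ :=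
    Integrable.of_bound (by fun_prop) 1
      (ae_of_all _ fun x ↦ (Complex.norm_exp_ofReal_mul_I _).le)
  simpa only [charFun_apply, RCLike.re_to_complex, Complex.exp_ofReal_mul_I_re] using
    integral_re hint

lemma integral_cos_sum_mul_pi {ι : Type*} [Fintype ι] (μ : ι → Measure ℝ)
    [∀ i, IsFiniteMeasure (μ i)] (t : ι → ℝ) :
    ∫ w, Real.cos (∑ i, w i * t i) ∂Measure.pi μ = (∏ i, charFun (μ i) (t i)).re := by
  have h := integral_cos_inner ((Measure.pi μ).map (WithLp.toLp 2)) (WithLp.toLp 2 t)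
  rw [charFun_pi, ← MeasurableEquiv.coe_toLp, integral_map_equiv] at h
  simpa [PiLp.inner_apply, mul_comm] using h

end CharFun

section Cauchy

lemma fourier_exp_mul_sub_mul_abs (x₀ : ℝ) {γ : ℝ≥0} (hγ : γ ≠ 0) :
    𝓕 (fun v : ℝ ↦ Complex.exp (2 * Real.pi * x₀ * I * v - 2 * Real.pi * γ * |v|)) =
      fun s ↦ (cauchyPDFReal x₀ γ s : ℂ) := by
  ext s
  have hdecay : |(2 * Real.pi * (x₀ - s) * I : ℂ).re| < (2 * Real.pi * γ : ℂ).re := by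
    simpa [Real.pi_pos] using pos_iff_ne_zero.mpr hγ
  have hden : (2 * Real.pi * γ : ℂ) ^ 2 - (2 * Real.pi * (x₀ - s) * I) ^ 2 =
      (2 * Real.pi) ^ 2 * ((s - x₀) ^ 2 + γ ^ 2) := by
    linear_combination -(2 * Real.pi * (x₀ - s) : ℂ) ^ 2 * Complex.I_sq
  calc 𝓕 (fun v : ℝ ↦ Complex.exp (2 * Real.pi * x₀ * I * v - 2 * Real.pi * γ * |v|)) s
      = ∫ v : ℝ, Complex.exp (2 * Real.pi * (x₀ - s) * I * v - 2 * Real.pi * γ * |v|) := by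
        rw [Real.fourier_real_eq_integral_exp_smul]
        congr! 2 with v
        rw [smul_eq_mul, ← Complex.exp_add]
        push_cast
        ring_nf
    _ = 2 * (2 * Real.pi * γ) / ((2 * Real.pi) ^ 2 * ((s - x₀) ^ 2 + γ ^ 2)) := by
        rw [integral_exp_mul_sub_mul_abs hdecay, hden]
    _ = cauchyPDFReal x₀ γ s := by
        rw [cauchyPDFReal_def]
        push_cast
        field

lemma charFun_cauchyMeasure (x₀ : ℝ) (γ : ℝ≥0) (t : ℝ) :
    charFun (ProbabilityTheory.cauchyMeasure x₀ γ) t = Complex.exp (x₀ * t * I - γ * |t|) := by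
  rcases eq_or_ne γ 0 with rfl | hγ
  · simp [charFun_dirac, mul_comm]
  have hdecay : |(2 * Real.pi * x₀ * I : ℂ).re| < (2 * Real.pi * γ : ℂ).re := by
    simpa [Real.pi_pos] using pos_iff_ne_zero.mpr hγ
  have hinv := Continuous.fourierInv_fourier_eq (by fun_prop)
    (integrable_exp_mul_sub_mul_abs hdecay)
    (by rw [fourier_exp_mul_sub_mul_abs x₀ hγ]; exact (integrable_cauchyPDFReal x₀).ofReal)
  rw [fourier_exp_mul_sub_mul_abs x₀ hγ] at hinv
  rw [ProbabilityTheory.cauchyMeasure_of_scale_ne_zero x₀ hγ]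
  refine (charFun_withDensity_ofReal (by fun_prop)
    (ae_of_all _ fun s ↦ (ProbabilityTheory.cauchyPDF_pos x₀ hγ s).le) t).trans ?_
  simp only [hinv, smul_eq_mul]
  rw [abs_mul, abs_of_pos (inv_pos.mpr Real.two_pi_pos)]
  push_cast
  field_simp

variable {γ : ℝ}

lemma cauchyMeasure_eq_cauchyMeasure_zero (hγ : 0 < γ) :
    cauchyMeasure γ = ProbabilityTheory.cauchyMeasure 0 γ.toNNReal := by
  rw [ProbabilityTheory.cauchyMeasure_of_scale_ne_zero 0 (Real.toNNReal_pos.mpr hγ).ne',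
    cauchyMeasure]
  congr with s
  rw [ProbabilityTheory.cauchyPDF_def, cauchyPDFReal_def, Real.coe_toNNReal γ hγ.le, sub_zero]
  field_simp

lemma isProbabilityMeasure_cauchyMeasure (hγ : 0 < γ) :
    IsProbabilityMeasure (cauchyMeasure γ) := by
  rw [cauchyMeasure_eq_cauchyMeasure_zero hγ]
  infer_instance

lemma integral_cos_sum_mul_pi_cauchyMeasure {ι : Type*} [Fintype ι] (hγ : 0 < γ) (t : ι → ℝ) :
    ∫ w, Real.cos (∑ i, w i * t i) ∂(Measure.pi fun _ : ι ↦ cauchyMeasure γ) =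
      Real.exp (-γ * ∑ i, |t i|) := by
  have := isProbabilityMeasure_cauchyMeasure hγ
  have hchar (s : ℝ) : charFun (cauchyMeasure γ) s = (Real.exp (-γ * |s|) : ℂ) := by
    simp [cauchyMeasure_eq_cauchyMeasure_zero hγ, charFun_cauchyMeasure, hγ.le]
  simp_rw [integral_cos_sum_mul_pi, hchar]
  rw [← Complex.ofReal_prod, Complex.ofReal_re, ← Real.exp_sum, Finset.mul_sum]

end Cauchy

lemma isProbabilityMeasure_uniformPhase : IsProbabilityMeasure uniformPhase := by
  have h : uniformPhase = ProbabilityTheory.cond volume (Set.Icc 0 (2 * Real.pi)) := by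
    rw [uniformPhase, ProbabilityTheory.cond, Real.volume_Icc, sub_zero]
  rw [h]
  exact ProbabilityTheory.cond_isProbabilityMeasure_of_finite
    (by simp [Real.pi_pos]) measure_Icc_lt_top.ne

section Feature

variable {N D : ℕ}

lemma sum_lapFeature_mul (w : Fin D → Fin N → ℝ) (b : Fin D → ℝ) (x y : Fin N → ℝ) :
    ∑ q, lapFeature N D w b x q * lapFeature N D w b y q =
      (D : ℝ)⁻¹ * ∑ j, Real.cos (∑ k, w j k * (x k - y k)) := by
  have hphase (j : Fin D) : ∑ k, w j k * (x k - y k) =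
      ((∑ k, w j k * x k) + b j) - ((∑ k, w j k * y k) + b j) := by
    simp only [mul_sub, Finset.sum_sub_distrib]
    ring
  have hscale : (D : ℝ)⁻¹ = (1 / √D) * (1 / √D) := by
    rw [div_mul_div_comm, Real.mul_self_sqrt D.cast_nonneg, one_mul, one_div]
  rw [Fintype.sum_prod_type, Finset.mul_sum]
  refine Finset.sum_congr rfl fun j _ ↦ ?_
  rw [hphase, Real.cos_sub, hscale, Fin.sum_univ_two]
  simp only [lapFeature, if_true, one_ne_zero, if_false]
  ring

variable {Ω : Type*} [MeasurableSpace Ω] {P : Measure Ω} {w : Ω → Fin D → Fin N → ℝ}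

lemma integral_sum_lapFeature_mul {μ : Measure (Fin N → ℝ)} [IsFiniteMeasure μ] (hD : D ≠ 0)
    (hw : ∀ j, HasLaw (fun ω ↦ w ω j) μ P) (b : Ω → Fin D → ℝ) (x y : Fin N → ℝ) :
    ∫ ω, ∑ q, lapFeature N D (w ω) (b ω) x q * lapFeature N D (w ω) (b ω) y q ∂P =
      ∫ v, Real.cos (∑ k, v k * (x k - y k)) ∂μ := by
  set g : (Fin N → ℝ) → ℝ := fun v ↦ Real.cos (∑ k, v k * (x k - y k))
  have hg : AEStronglyMeasurable g μ := by fun_prop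
  have hint : Integrable g μ :=
    Integrable.of_bound hg 1 (ae_of_all _ fun _ ↦ Real.abs_cos_le_one _)
  have hint_comp (j : Fin D) : Integrable (fun ω ↦ g (w ω j)) P := by
    rw [← (hw j).map_eq] at hint
    exact hint.comp_aemeasurable (hw j).aemeasurable
  calc ∫ ω, ∑ q, lapFeature N D (w ω) (b ω) x q * lapFeature N D (w ω) (b ω) y q ∂P
      = (D : ℝ)⁻¹ * ∑ j, ∫ ω, g (w ω j) ∂P := by
        simp_rw [sum_lapFeature_mul]
        rw [integral_const_mul, integral_finsetSum _ fun j _ ↦ hint_comp j]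
    _ = (D : ℝ)⁻¹ * ∑ _j : Fin D, ∫ v, g v ∂μ := by
        congr! with j
        exact (hw j).integral_comp hg
    _ = ∫ v, g v ∂μ := by
        rw [Fin.sum_const, nsmul_eq_mul, inv_mul_cancel_left₀ (Nat.cast_ne_zero.mpr hD)]

theorem lapFeature_expectation_inner_general (hD : D ≠ 0) {α : ℝ} (hα : 0 < α)
    (hw : ∀ j, HasLaw (fun ω ↦ w ω j) (Measure.pi fun _ : Fin N ↦ cauchyMeasure α⁻¹) P)
    (b : Ω → Fin D → ℝ) (x y : Fin N → ℝ) :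
    ∫ ω, ∑ q, lapFeature N D (w ω) (b ω) x q * lapFeature N D (w ω) (b ω) y q ∂P =
      Real.exp (-(∑ k, |x k - y k|) / α) := by
  have := isProbabilityMeasure_cauchyMeasure (inv_pos.mpr hα)
  rw [integral_sum_lapFeature_mul hD hw,
    integral_cos_sum_mul_pi_cauchyMeasure (inv_pos.mpr hα) fun k ↦ x k - y k, neg_mul,
    inv_mul_eq_div, neg_div]

end Feature

/-- Random Fourier features with independent Cauchy frequencies of scale `α⁻¹` and
independent uniform phases on `[0, 2π]` (joint law the product measure) give an
unbiased estimator of the Laplacian kernel: for all `x, y ∈ ℝ^N`,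
`E[⟨φ(x), φ(y)⟩] = exp(−‖x−y‖₁/α)`. -/
theorem lapFeature_expectation_inner (N D : ℕ) (hD : 1 ≤ D) (α : ℝ) (hα : 0 < α)
    (x y : Fin N → ℝ) :
    ∫ p : (Fin D → Fin N → ℝ) × (Fin D → ℝ),
        (∑ q : Fin D × Fin 2, lapFeature N D p.1 p.2 x q * lapFeature N D p.1 p.2 y q)
        ∂((Measure.pi fun _ : Fin D =>
              Measure.pi fun _ : Fin N => cauchyMeasure α⁻¹).prod
            (Measure.pi fun _ : Fin D => uniformPhase))
      = Real.exp (-(∑ k, |x k - y k|) / α) := by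
  have := isProbabilityMeasure_cauchyMeasure (inv_pos.mpr hα)
  have := isProbabilityMeasure_uniformPhase
  exact lapFeature_expectation_inner_general (Nat.ne_zero_of_lt hD) hα
    (fun j ↦ ((measurePreserving_eval (fun _ ↦ Measure.pi fun _ ↦ cauchyMeasure α⁻¹) j).comp
      measurePreserving_fst).hasLaw) Prod.snd x y
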